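/- Action of X_n^+ on the Schur basis via horizontal strips: for every partition μ of length l, all m, n ∈ ℤ and i ∈ {0,1}, the following holds in W_i: X_n^+ (s_μ e^{mα}e^{iα/2}) = ( ∑_{j≥0} q^{−2m−n−1−i−2j} · sgn((a_j, μ)) · ∑_λ s_λ ) e^{(m+1)α}e^{iα/2}, where a_j := −2m−n−1−i−j, (a_j,μ) ∈ ℤ^{l+1} is the tuple (a_j, μ₁, …, μ_l), the inner sum is over all partitions λ such that π((a_j,μ)) is a partition and λ − π((a_j,μ)) is a horizontal j-strip, and only finitely many values of j contribute nonzero terms. Equivalently, X_n^+ (s_μ e^{mα}e^{iα/2}) = ∑_{j≥0} q^{−2m−n−1−i−2j} · h_j · s_{(a_j,μ)} · e^{(m+1)α}e^{iα/2}. -/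

import Mathlib

/-!
Put `b = -2m-n-1-i` and `H(x) = ∑ h_k x^k`.

*Second formula.* Since `(1+q^{2n})q^{-n} = q^n + q^{-n}`, the creation part of `X⁺(z)` is
`H(qz) H(z/q)`. By Taylor's formula, the annihilation part `exp(-∑ q^{-n} z^{-n} ∂/∂p_n)` is the
translation `p_n ↦ p_n - q^{-n} t^n` with `t = z⁻¹`, a ring homomorphism that multiplies `H(x)` by
`1 - ux` for `u = t/q`. It therefore sends `s_μ` to `det (h_{μ_i-i+j} - u h_{μ_i-i+j-1})`, which is
the expansion of the Jacobi–Trudi determinant of `(a, μ)` along its first row with `h_{a+k}`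
replaced by `u^k`. Multiplying by `H(qz)` turns `u^k` back into the entries `h_{a+k}` (Bernstein's
formula), and the remaining factor `H(z/q)` supplies the `h_j`.

*First formula.* It agrees with the second one term by term. Permuting rows gives
`s_ν = sgn(ν) s_{π(ν)}`, and `s_π = 0` if the antitone tuple `π` has a negative entry. For a
partition `π` the Pieri rule follows from the tail series `G_k = ∑_b h_{k+b} t^b`, which satisfy
`G_k = h_k + t G_{k+1}`. The determinant of `G_{π_i-i+c}`, with one zero part appended to `π`,
equals `H(t) s_π` by column operations. Subtracting from each row a multiple of the preceding one
removes exactly the terms violating `λ_{i+1} ≤ π_i`, and what is left is `∑ t^{|λ|-|π|} s_λ` over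
horizontal strips.
-/

open MvPolynomial

noncomputable section

/-- The base field `F = ℚ(q)`. -/
abbrev Fq : Type := RatFunc ℚ

/-- The indeterminate `q ∈ ℚ(q)`. -/
def qq : Fq := RatFunc.X

/-- `Λ_F = F[p₁,p₂,…]`, with the variable `X n` (for `n : ℕ+`) the power sum `p_n`. -/
abbrev LamF : Type := MvPolynomial ℕ+ Fq

/-- The power sum `p_n`. -/
def ppF (n : ℕ+) : LamF := X n

/-- The family `g` with generating function `∑_k g_k t^k = exp (∑_{n≥1} c n · p_n tⁿ/n)`,
characterized by `g 0 = 1` and the recursion obtained by differentiating: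
`(k+1) · g (k+1) = ∑_{i=0}^{k} c (i+1) · p_{i+1} · g (k−i)`. -/
def genFamF (c : ℕ → Fq) : ℕ → LamF
  | 0 => 1
  | (k+1) => (((k : Fq) + 1)⁻¹) •
      ∑ i ∈ Finset.range (k+1), c (i+1) • (ppF ⟨i+1, Nat.succ_pos i⟩ * genFamF c (k - i))
  decreasing_by exact Nat.lt_succ_of_le (Nat.sub_le k i)

/-- The complete homogeneous symmetric function `h_k`. -/
def hhF : ℕ → LamF := genFamF fun _ => 1

/-- The elementary symmetric function `e_k`. -/
def eeF : ℕ → LamF := genFamF fun n => (-1)^(n+1)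

/-- `h` indexed by `ℤ` (zero in negative degrees). -/
def hZF (n : ℤ) : LamF := if 0 ≤ n then hhF n.toNat else 0

/-- `e` indexed by `ℤ` (zero in negative degrees). -/
def eZF (n : ℤ) : LamF := if 0 ≤ n then eeF n.toNat else 0

/-- The creation coefficients of `X⁺(z)`:
`exp (∑ ((1+q^{2n})q^{−n}/n)·p_n·zⁿ) = ∑_k HpF k · z^k`. -/
def HpF : ℕ → LamF := genFamF fun n => (1 + qq ^ (2*n)) * (qq⁻¹) ^ n

/-- `HpF` indexed by `ℤ`. -/
def HZp (n : ℤ) : LamF := if 0 ≤ n then HpF n.toNat else 0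

/-- The annihilation avatars for `X⁺(z)`: since
`(1+q^{2n})q^{−n}/n · a_n = q^{−n}·∂/∂p_n`, the coefficient of `z^{−j}` in
`exp (−∑ ((1+q^{2n})q^{−n}/n)·a_n·z^{−n})` is `ApF j` with `p_i ↦ i·∂/∂p_i`
substituted, where `∑_k ApF k t^k = exp (−∑ q^{−n} p_n tⁿ/n)`. -/
def ApF : ℕ → LamF := genFamF fun n => -((qq⁻¹) ^ n)

/-- The creation coefficients of `X⁻(z)`:
`exp (−∑ ((1+q^{2n})/n)·p_n·zⁿ) = ∑_k HmF k · z^k`. -/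
def HmF : ℕ → LamF := genFamF fun n => -(1 + qq ^ (2*n))

/-- `HmF` indexed by `ℤ`. -/
def HZm (n : ℤ) : LamF := if 0 ≤ n then HmF n.toNat else 0

/-- The differential operator `∏_i (i·∂/∂p_i)^(α i)`. -/
def monOpF (α : ℕ+ →₀ ℕ) : Module.End Fq LamF :=
  ((α.support.sort (· ≤ ·)).map fun (i : ℕ+) =>
    (((i : ℕ) : Fq) • (pderiv i).toLinearMap) ^ (α i)).prod

/-- `f(∂) P`: substitute `p_i ↦ i·∂/∂p_i` in `f` and apply to `P`. -/
def DopF (f : LamF) (P : LamF) : LamF := ∑ α ∈ f.support, f.coeff α • monOpF α P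

/-- Bound for the weighted degree of `P` (weight of `p_i` is `i`). -/
def wboundF (P : LamF) : ℕ := P.support.sup fun α => α.sum fun i k => (i : ℕ) * k

/-- The level-one Fock space `W_i = Λ_F ⊗ F[ℤα]e^{iα/2}`, realized as `ℤ →₀ Λ_F`;
`Finsupp.single m P` represents `P·e^{mα}e^{iα/2}`. -/
abbrev W : Type := ℤ →₀ LamF

/-- The Drinfeld current component `X_n^+` on `W_i` (the parameter `i ∈ {0,1}` enters
through `z^∂ e^{mα}e^{iα/2} = z^{2m+i} e^{mα}e^{iα/2}`): the coefficient of `z^{−n−1}` in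
`X⁺(z) = exp(∑((1+q^{2n})q^{−n}/n)a_{−n}zⁿ)·exp(−∑((1+q^{2n})q^{−n}/n)a_n z^{−n})·e^α z^∂`,
i.e. `X_n^+(P·e^{mα}) = ∑_j HpF_{j−n−1−2m−i} · (ApF j)(∂) P · e^{(m+1)α}`
(only the finitely many `j ≤ wboundF P` contribute). -/
def Xp (i n : ℤ) (w : W) : W :=
  w.sum fun m P => Finsupp.single (m+1)
    (∑ j ∈ Finset.range (wboundF P + 1),
      HZp ((j : ℤ) - n - 1 - 2*m - i) * DopF (ApF j) P)

/-- The Drinfeld current component `X_n^-` on `W_i`: the coefficient of `z^{−n−1}` in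
`X⁻(z) = exp(−∑((1+q^{2n})/n)a_{−n}zⁿ)·exp(∑((1+q^{2n})/n)a_n z^{−n})·e^{−α} z^{−∂}`,
i.e. `X_n^-(P·e^{mα}) = ∑_j HmF_{j+2m+i−n−1} · h_j(∂) P · e^{(m−1)α}`
(here `(1+q^{2n})/n · a_n = ∂/∂p_n`, whose generating family is `h`). -/
def Xm (i n : ℤ) (w : W) : W :=
  w.sum fun m P => Finsupp.single (m-1)
    (∑ j ∈ Finset.range (wboundF P + 1),
      HZm ((j : ℤ) + 2*m + i - n - 1) * DopF (hhF j) P)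

/-- The `q`-factorial `[r]! = ∏_{k=1}^r (q^k − q^{−k})/(q − q^{−1})`. -/
def qfact (r : ℕ) : Fq := ∏ k ∈ Finset.range r, (qq ^ (k+1) - (qq⁻¹) ^ (k+1)) / (qq - qq⁻¹)

/-- The divided power `x^{(r)} = x^r / [r]!` of an operator on `W`. -/
def divpow (f : W → W) (r : ℕ) (w : W) : W := (qfact r)⁻¹ • (f^[r] w)

/-- Schur function of an integer tuple: `s_ρ = det (h_{ρ_i − i + j})`. -/
def schurF {l : ℕ} (ρ : Fin l → ℤ) : LamF :=
  (Matrix.of fun i j : Fin l => hZF (ρ i - (i.1 : ℤ) + (j.1 : ℤ))).det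

/-- Dual Schur function of an integer tuple: `s_{ρ'} = det (e_{ρ_i − i + j})`. -/
def schurEF {l : ℕ} (ρ : Fin l → ℤ) : LamF :=
  (Matrix.of fun i j : Fin l => eZF (ρ i - (i.1 : ℤ) + (j.1 : ℤ))).det

/-- `q^{±∂}`: `q^{ε∂}(P·e^{mα}e^{iα/2}) = q^{ε(2m+i)}·P·e^{mα}e^{iα/2}`. -/
def qd (i ε : ℤ) (w : W) : W := w.sum fun m P => Finsupp.single m (qq ^ (ε * (2*m + i)) • P)

/-- The Chevalley generator `e₁ = X₀⁺`. -/
def che1 (i : ℤ) : W → W := Xp i 0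
/-- The Chevalley generator `f₁ = X₀⁻`. -/
def chf1 (i : ℤ) : W → W := Xm i 0
/-- The Chevalley generator `e₀ = X₁⁻ ∘ q^{−∂}`. -/
def che0 (i : ℤ) (w : W) : W := Xm i 1 (qd i (-1) w)
/-- The Chevalley generator `f₀ = q^∂ ∘ X₋₁⁺`. -/
def chf0 (i : ℤ) (w : W) : W := qd i 1 (Xp i (-1) w)


/-- `δ = (r−1, r−2, …, 1, 0)` as a function `Fin r → ℤ`. -/
def deltaT (r : ℕ) (i : Fin r) : ℤ := (r : ℤ) - 1 - (i.1 : ℤ)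

/-- `σ` sorts the tuple `ν + δ` into strictly decreasing order. -/
def Sorts {r : ℕ} (ν : Fin r → ℤ) (σ : Equiv.Perm (Fin r)) : Prop :=
  StrictAnti fun i => ν (σ i) + deltaT r (σ i)

-- `sgn(ν)`: `0` if `ν` is degenerate (`ν+δ` has a repeated entry, so no sorting
-- permutation exists), and otherwise `(−1)^{ℓ(σ)} = sign σ` for the unique `σ` with
-- `σ(ν+δ)` strictly decreasing.
open Classical in
def sgnT {r : ℕ} (ν : Fin r → ℤ) : ℤ :=
  if h : ∃ σ, Sorts ν σ then (Equiv.Perm.sign h.choose : ℤ) else 0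

-- `π(ν) := σ(ν+δ) − δ` for the sorting permutation `σ` (junk value `0` if `ν` is
-- degenerate).
open Classical in
def piT {r : ℕ} (ν : Fin r → ℤ) : Fin r → ℤ :=
  if h : ∃ σ, Sorts ν σ then
    (fun i => ν (h.choose i) + deltaT r (h.choose i) - deltaT r i) else 0

/-- `π` is a partition: weakly decreasing with nonnegative entries. -/
def IsPartitionT {r : ℕ} (π : Fin r → ℤ) : Prop := Antitone π ∧ ∀ i, 0 ≤ π i

/-- The entry in row `t` (0-indexed) of a tuple, padded by `0`. -/
def padZ {r : ℕ} (π : Fin r → ℤ) (t : ℕ) : ℤ := if h : t < r then π ⟨t, h⟩ else 0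

/-- The number of entries of `π` that are `≥ c+1`, i.e. the (0-indexed) `c`-th entry of
the conjugate partition `π'`. -/
def conjT {r : ℕ} (π : Fin r → ℤ) (c : ℕ) : ℤ :=
  ((Finset.univ.filter fun i : Fin r => (c : ℤ) + 1 ≤ π i).card : ℤ)

/-- `λ − π` is a horizontal `n`-strip: `π ⊆ λ`, `|λ| = |π| + n`, and at most one box is
added in each column (`λ'_c ≤ π'_c + 1`). -/
def HStrip {r s : ℕ} (π : Fin r → ℤ) (lam : Fin s → ℕ) (n : ℕ) : Prop :=
  (∀ t : ℕ, padZ π t ≤ padZ (fun i => (lam i : ℤ)) t) ∧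
  ((∑ i, (lam i : ℤ)) = (∑ i, π i) + n) ∧
  (∀ c : ℕ, conjT (fun i : Fin s => (lam i : ℤ)) c ≤ conjT π c + 1)

/-! ### Power series with a given logarithmic derivative -/

section LogarithmicDerivative

variable {R S : Type*} [CommRing R] [CommRing S]

lemma derivative_map (f : R →+* S) (F : PowerSeries R) :
    PowerSeries.derivative S (F.map f) = (PowerSeries.derivative R F).map f := by
  ext1 k
  simp only [PowerSeries.coeff_derivative, PowerSeries.coeff_map, map_mul, map_add, map_natCast,
    map_one]

lemma derivative_rescale (r : R) (F : PowerSeries R) :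
    PowerSeries.derivative R (PowerSeries.rescale r F) =
      PowerSeries.C r * PowerSeries.rescale r (PowerSeries.derivative R F) := by
  ext1 k
  rw [PowerSeries.coeff_derivative, PowerSeries.coeff_C_mul, PowerSeries.coeff_rescale,
    PowerSeries.coeff_rescale, PowerSeries.coeff_derivative]
  ring

lemma eq_zero_of_derivative_eq_mul [IsAddTorsionFree R] {L F : PowerSeries R}
    (hF : PowerSeries.derivative R F = L * F) (h0 : PowerSeries.constantCoeff F = 0) : F = 0 := by
  ext1 k
  rw [map_zero]
  induction k using Nat.strong_induction_on with
  | _ k ih =>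
    cases k with
    | zero => rwa [PowerSeries.coeff_zero_eq_constantCoeff_apply]
    | succ k =>
      have hk : PowerSeries.coeff k (L * F) = 0 := by
        rw [PowerSeries.coeff_mul]
        refine Finset.sum_eq_zero fun x hx => ?_
        rw [ih x.2 (Nat.lt_succ_of_le (Finset.HasAntidiagonal.antidiagonal.snd_le hx)), mul_zero]
      rw [← hF, PowerSeries.coeff_derivative, ← Nat.cast_succ, mul_comm, ← nsmul_eq_mul] at hk
      exact (smul_eq_zero_iff_right k.succ_ne_zero).mp hk

lemma eq_of_derivative_eq_mul [IsAddTorsionFree R] {L F G : PowerSeries R}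
    (hF : PowerSeries.derivative R F = L * F) (hG : PowerSeries.derivative R G = L * G)
    (h0 : PowerSeries.constantCoeff F = PowerSeries.constantCoeff G) : F = G := by
  refine sub_eq_zero.mp (eq_zero_of_derivative_eq_mul (L := L) ?_ ?_)
  · rw [map_sub, hF, hG, mul_sub]
  · rw [map_sub, h0, sub_self]

lemma derivative_one_sub_C_mul_X (u : R) :
    PowerSeries.derivative R (1 - PowerSeries.C u * PowerSeries.X) =
      -(PowerSeries.mk fun k => u ^ (k + 1)) * (1 - PowerSeries.C u * PowerSeries.X) := by
  have hgeom : (PowerSeries.mk fun k => u ^ (k + 1)) * (1 - PowerSeries.C u * PowerSeries.X) =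
      PowerSeries.C u := by
    ext1 k
    cases k with
    | zero => simp [mul_sub, ← mul_assoc]
    | succ k =>
      rw [mul_sub, mul_one, ← mul_assoc, map_sub, PowerSeries.coeff_succ_mul_X,
        PowerSeries.coeff_mul_C, PowerSeries.coeff_mk, PowerSeries.coeff_mk, ← pow_succ, sub_self,
        PowerSeries.coeff_C, if_neg k.succ_ne_zero]
  rw [neg_mul, hgeom, map_sub, Derivation.leibniz]
  simp

lemma derivative_one_sub_C_mul_X_mul (u : R) {L F : PowerSeries R}
    (hF : PowerSeries.derivative R F = L * F) :
    PowerSeries.derivative R ((1 - PowerSeries.C u * PowerSeries.X) * F) =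
      (L - PowerSeries.mk fun k => u ^ (k + 1)) *
        ((1 - PowerSeries.C u * PowerSeries.X) * F) := by
  rw [Derivation.leibniz, derivative_one_sub_C_mul_X, hF, smul_eq_mul, smul_eq_mul]
  ring

end LogarithmicDerivative

/-! ### Generating series of the families `genFamF c` -/

/-- The generating series `∑ g_k x^k = exp (∑ c_n p_n xⁿ / n)` of the family `g = genFamF c`. -/
def genSeries (c : ℕ → Fq) : PowerSeries LamF := PowerSeries.mk (genFamF c)

/-- The series `∑ c_{k+1} p_{k+1} x^k`, which is the logarithmic derivative of `genSeries c`. -/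
def powerSumSeries (c : ℕ → Fq) : PowerSeries LamF :=
  PowerSeries.mk fun k => c (k + 1) • ppF k.succPNat

lemma genFamF_zero (c : ℕ → Fq) : genFamF c 0 = 1 := by
  rw [genFamF]

lemma succ_smul_genFamF_succ (c : ℕ → Fq) (k : ℕ) :
    ((k : Fq) + 1) • genFamF c (k + 1) =
      ∑ i ∈ Finset.range (k + 1), c (i + 1) • (ppF i.succPNat * genFamF c (k - i)) := by
  rw [genFamF, smul_inv_smul₀ (Nat.cast_add_one_ne_zero k)]
  rfl

lemma constantCoeff_genSeries (c : ℕ → Fq) : PowerSeries.constantCoeff (genSeries c) = 1 := by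
  rw [← PowerSeries.coeff_zero_eq_constantCoeff_apply, genSeries, PowerSeries.coeff_mk,
    genFamF_zero]

lemma derivative_genSeries (c : ℕ → Fq) :
    PowerSeries.derivative LamF (genSeries c) = powerSumSeries c * genSeries c := by
  ext1 k
  rw [PowerSeries.coeff_derivative, PowerSeries.coeff_mul,
    Finset.Nat.sum_antidiagonal_eq_sum_range_succ_mk]
  simp only [genSeries, powerSumSeries, PowerSeries.coeff_mk, smul_mul_assoc]
  rw [← succ_smul_genFamF_succ, mul_comm, Algebra.smul_def]
  simp

lemma constantCoeff_map_genSeries {R : Type*} [CommRing R] (f : LamF →+* R) (c : ℕ → Fq) :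
    PowerSeries.constantCoeff (PowerSeries.map f (genSeries c)) = 1 := by
  rw [← PowerSeries.coeff_zero_eq_constantCoeff_apply, PowerSeries.coeff_map,
    PowerSeries.coeff_zero_eq_constantCoeff_apply, constantCoeff_genSeries, map_one]

lemma derivative_map_genSeries {R : Type*} [CommRing R] (f : LamF →+* R) (c : ℕ → Fq) :
    PowerSeries.derivative R (PowerSeries.map f (genSeries c)) =
      PowerSeries.map f (powerSumSeries c) * PowerSeries.map f (genSeries c) := by
  rw [derivative_map, derivative_genSeries, map_mul]

lemma map_genSeries_eq {R : Type*} [CommRing R] [IsAddTorsionFree R] (f : LamF →+* R)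
    (c : ℕ → Fq) {F : PowerSeries R} (h0 : PowerSeries.constantCoeff F = 1)
    (hF : PowerSeries.derivative R F = PowerSeries.map f (powerSumSeries c) * F) :
    PowerSeries.map f (genSeries c) = F :=
  eq_of_derivative_eq_mul (derivative_map_genSeries f c) hF
    ((constantCoeff_map_genSeries f c).trans h0.symm)

lemma genSeries_eq (c : ℕ → Fq) {F : PowerSeries LamF} (h0 : PowerSeries.constantCoeff F = 1)
    (hF : PowerSeries.derivative LamF F = powerSumSeries c * F) : genSeries c = F := by
  have h := map_genSeries_eq (RingHom.id LamF) c h0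
  rw [PowerSeries.map_id] at h
  exact h hF

lemma genSeries_add (c d : ℕ → Fq) :
    genSeries (fun n => c n + d n) = genSeries c * genSeries d := by
  refine genSeries_eq _ ?_ ?_
  · rw [map_mul, constantCoeff_genSeries, constantCoeff_genSeries, one_mul]
  · have hlog : powerSumSeries (fun n => c n + d n) = powerSumSeries c + powerSumSeries d := by
      ext1 k
      simp only [powerSumSeries, PowerSeries.coeff_mk, add_smul, map_add]
    rw [Derivation.leibniz, derivative_genSeries, derivative_genSeries, hlog, smul_eq_mul,
      smul_eq_mul]
    ring

lemma genSeries_mul_pow (c : ℕ → Fq) (r : Fq) :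
    genSeries (fun n => c n * r ^ n) = PowerSeries.rescale (C r) (genSeries c) := by
  refine genSeries_eq _ ?_ ?_
  · rw [← PowerSeries.coeff_zero_eq_constantCoeff_apply, PowerSeries.coeff_rescale, pow_zero,
      one_mul, PowerSeries.coeff_zero_eq_constantCoeff_apply, constantCoeff_genSeries]
  · have hlog : powerSumSeries (fun n => c n * r ^ n) =
        PowerSeries.C (C r) * PowerSeries.rescale (C r) (powerSumSeries c) := by
      ext1 k
      simp only [powerSumSeries, PowerSeries.coeff_mk, PowerSeries.coeff_C_mul,
        PowerSeries.coeff_rescale, smul_eq_C_mul, C_mul, C_pow]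
      ring
    rw [derivative_rescale, derivative_genSeries, map_mul, hlog, mul_assoc]

lemma genFamF_mul_pow (c : ℕ → Fq) (r : Fq) (k : ℕ) :
    genFamF (fun n => c n * r ^ n) k = r ^ k • genFamF c k := by
  have h := congrArg (PowerSeries.coeff k) (genSeries_mul_pow c r)
  rwa [PowerSeries.coeff_rescale, genSeries, genSeries, PowerSeries.coeff_mk, PowerSeries.coeff_mk,
    ← C_pow, ← smul_eq_C_mul] at h

lemma genFamF_add (c d : ℕ → Fq) (k : ℕ) :
    genFamF (fun n => c n + d n) k =
      ∑ j ∈ Finset.range (k + 1), genFamF c j * genFamF d (k - j) := by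
  have h := congrArg (PowerSeries.coeff k) (genSeries_add c d)
  rw [PowerSeries.coeff_mul, Finset.Nat.sum_antidiagonal_eq_sum_range_succ_mk] at h
  simpa only [genSeries, PowerSeries.coeff_mk] using h

lemma qq_ne_zero : qq ≠ 0 := RatFunc.X_ne_zero

/-- Since `(1 + q^{2n}) q^{-n} = q^{-n} + qⁿ`, the creation part of `X⁺(z)` is `H(z/q) H(qz)`. -/
lemma HpF_eq_sum (k : ℕ) :
    HpF k = ∑ j ∈ Finset.range (k + 1),
      (qq⁻¹ ^ j * qq ^ (k - j)) • (hhF j * hhF (k - j)) := by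
  have hc : (fun n : ℕ => (1 + qq ^ (2 * n)) * qq⁻¹ ^ n)
      = fun n => 1 * qq⁻¹ ^ n + 1 * qq ^ n := by
    funext n
    have := qq_ne_zero
    rw [two_mul, pow_add, inv_pow]
    field_simp
  rw [HpF, hc, genFamF_add]
  refine Finset.sum_congr rfl fun j _ => ?_
  rw [genFamF_mul_pow (fun _ => 1), genFamF_mul_pow (fun _ => 1), smul_mul_smul_comm]
  rfl

/-! ### The operators `f(∂)` and translations of the power sums -/

/-- The operator `i·∂/∂p_i`. -/
def powerSumDeriv (i : ℕ+) : Module.End Fq LamF := ((i : ℕ) : Fq) • (pderiv i).toLinearMap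

lemma powerSumDeriv_apply (i : ℕ+) (P : LamF) :
    powerSumDeriv i P = ((i : ℕ) : Fq) • pderiv i P := rfl

lemma pderiv_comm {R σ : Type*} [CommRing R] (i j : σ) (P : MvPolynomial σ R) :
    pderiv i (pderiv j P) = pderiv j (pderiv i P) := by
  classical
  have h : ⁅pderiv (R := R) i, pderiv (R := R) j⁆ = 0 := by
    refine derivation_ext fun k => ?_
    simp [Derivation.commutator_apply, pderiv_X, Pi.single_apply, apply_ite]
  rw [← sub_eq_zero, ← Derivation.commutator_apply, h, Derivation.zero_apply]

lemma powerSumDeriv_comm (i j : ℕ+) :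
    powerSumDeriv i * powerSumDeriv j = powerSumDeriv j * powerSumDeriv i := by
  refine LinearMap.ext fun P => ?_
  simp only [Module.End.mul_apply, powerSumDeriv_apply, map_smul, smul_smul]
  rw [pderiv_comm, mul_comm]

/-- The subalgebra generated by the commuting operators `i·∂/∂p_i`. -/
abbrev constCoeffOps : Subalgebra Fq (Module.End Fq LamF) :=
  Algebra.adjoin Fq (Set.range powerSumDeriv)

instance : IsMulCommutative constCoeffOps :=
  Algebra.isMulCommutative_adjoin Fq fun _ ⟨i, hi⟩ _ ⟨j, hj⟩ => by
    rw [← hi, ← hj, powerSumDeriv_comm]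

open scoped IsMulCommutative in
/-- The substitution `f ↦ f(∂)`, `p_i ↦ i·∂/∂p_i`, as an algebra homomorphism. -/
def diffOp : LamF →ₐ[Fq] Module.End Fq LamF :=
  constCoeffOps.val.comp <| aeval fun i : ℕ+ =>
    (⟨powerSumDeriv i, Algebra.subset_adjoin ⟨i, rfl⟩⟩ : constCoeffOps)

open scoped IsMulCommutative in
lemma diffOp_ppF (i : ℕ+) : diffOp (ppF i) = powerSumDeriv i := by
  rw [diffOp, AlgHom.comp_apply, ppF, aeval_X]
  rfl

open scoped IsMulCommutative in
lemma diffOp_monomial (α : ℕ+ →₀ ℕ) (r : Fq) : diffOp (monomial α r) = r • monOpF α := by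
  have hprod : ∀ d : ℕ+ → constCoeffOps,
      (α.prod fun i k => d i ^ k) = ((α.support.sort (· ≤ ·)).map fun i => d i ^ α i).prod :=
    fun d => by
      rw [Finsupp.prod, ← List.prod_toFinset _ (Finset.sort_nodup _ _), Finset.sort_toFinset]
  rw [diffOp, AlgHom.comp_apply, aeval_monomial, ← Algebra.smul_def, map_smul, hprod,
    map_list_prod, List.map_map]
  rfl

lemma DopF_eq_diffOp (f P : LamF) : DopF f P = diffOp f P := by
  conv_rhs => rw [f.as_sum, map_sum, LinearMap.sum_apply]
  exact Finset.sum_congr rfl fun α _ => by rw [diffOp_monomial, LinearMap.smul_apply]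

lemma derivation_aeval_eq_sum {R B M σ : Type*} [CommSemiring R] [CommSemiring B] [Algebra R B]
    [AddCommMonoid M] [Module B M] [Module R M] [IsScalarTower R B M] (D : Derivation R B M)
    (f : σ → B) {s : Finset σ} {P : MvPolynomial σ R} (hs : P.vars ⊆ s) :
    D (aeval f P) = ∑ n ∈ s, aeval f (pderiv n P) • D (f n) := by
  classical
  let _ : Algebra (MvPolynomial σ R) B := (aeval f).toAlgebra
  let _ : Module (MvPolynomial σ R) M := Module.compHom M (aeval f).toRingHom
  have : IsScalarTower (MvPolynomial σ R) B M := ⟨fun Q b m => mul_smul (aeval f Q) b m⟩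
  have : IsScalarTower R (MvPolynomial σ R) B :=
    IsScalarTower.of_algebraMap_eq fun r => ((aeval f).commutes r).symm
  have : IsScalarTower R (MvPolynomial σ R) M := ⟨fun r Q m =>
    (congrArg (· • m) (map_smul (aeval f) r Q)).trans (smul_assoc r (aeval f Q) m)⟩
  let D' : Derivation R (MvPolynomial σ R) M :=
    ∑ n ∈ s, (LinearMap.toSpanSingleton (MvPolynomial σ R) M (D (f n))).compDer (pderiv n)
  have hD' : ∀ Q, D' Q = ∑ n ∈ s, aeval f (pderiv n Q) • D (f n) := fun Q => by
    rw [← Derivation.coeFnAddMonoidHom_apply, map_sum, Finset.sum_apply]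
    rfl
  have h : D.compAlgebraMap (MvPolynomial σ R) P = D' P := by
    refine derivation_eq_of_forall_mem_vars fun k hk => ?_
    rw [hD']
    refine Eq.trans ?_ (Finset.sum_eq_single_of_mem k (hs hk) fun n _ hn => ?_).symm
    · rw [pderiv_X_self, map_one, one_smul]
      exact congrArg D (aeval_X f k)
    · rw [pderiv_X_of_ne hn.symm, map_zero, zero_smul]
  exact h.trans (hD' P)

/-- The translation `p_n ↦ p_n + c_n tⁿ`; by Taylor's formula it is the generating function in
`t` of the operators `genFamF c k (∂)`. -/
def transl (c : ℕ → Fq) : LamF →ₐ[Fq] Polynomial LamF :=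
  aeval fun n : ℕ+ => Polynomial.C (ppF n) + Polynomial.monomial (n : ℕ) (C (c n))

lemma transl_X (c : ℕ → Fq) (n : ℕ+) :
    transl c (X n) = Polynomial.C (ppF n) + Polynomial.monomial (n : ℕ) (C (c n)) :=
  aeval_X _ n

lemma coeff_zero_transl (c : ℕ → Fq) (P : LamF) : (transl c P).coeff 0 = P := by
  have h : (Polynomial.constantCoeff.comp (transl c : LamF →+* Polynomial LamF)) =
      RingHom.id LamF := by
    refine ringHom_ext (fun r => ?_) fun n => ?_
    · simp [← algebraMap_eq]
    · simp [transl_X, ppF, Polynomial.coeff_monomial]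
  exact congrArg (fun f : LamF →+* LamF => f P) h

lemma coeff_mul_derivative_transl_X (c : ℕ → Fq) (n : ℕ+) (Q : Polynomial LamF) (k : ℕ) :
    (Q * Polynomial.derivative (transl c (X n))).coeff k =
      if (n : ℕ) ≤ k + 1 then ((n : Fq) * c n) • Q.coeff (k + 1 - n) else 0 := by
  have hn : (n : ℕ) - 1 + 1 = n := Nat.sub_add_cancel n.pos
  rw [transl_X, map_add, Polynomial.derivative_C, zero_add, Polynomial.derivative_monomial,
    ← Polynomial.C_mul_X_pow_eq_monomial, mul_left_comm, Polynomial.coeff_C_mul,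
    Polynomial.coeff_mul_X_pow', mul_ite, mul_zero, smul_eq_C_mul, C_mul, mul_comm (C (n : Fq))]
  refine if_congr (by omega) ?_ rfl
  rw [show k - ((n : ℕ) - 1) = k + 1 - n by omega]
  simp

lemma coeff_transl_succ (c : ℕ → Fq) (k : ℕ) (P : LamF) :
    ((k : Fq) + 1) • (transl c P).coeff (k + 1) =
      ∑ i ∈ Finset.range (k + 1),
        c (i + 1) • (transl c (powerSumDeriv i.succPNat P)).coeff (k - i) := by
  let degrees := (Finset.range (k + 1)).map ⟨Nat.succPNat, Nat.succPNat_injective⟩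
  have hchain := derivation_aeval_eq_sum (Polynomial.derivative'.restrictScalars Fq)
    (transl c ∘ X) (P := P) (Finset.subset_union_left (s₂ := degrees))
  rw [← aeval_unique] at hchain
  calc ((k : Fq) + 1) • (transl c P).coeff (k + 1)
      = (Polynomial.derivative (transl c P)).coeff k := by
        rw [Polynomial.coeff_derivative, Algebra.smul_def, mul_comm]
        simp
    _ = ∑ n ∈ P.vars ∪ degrees,
          (transl c (pderiv n P) * Polynomial.derivative (transl c (X n))).coeff k := by
        rw [← Polynomial.finsetSum_coeff]
        exact congrArg (Polynomial.coeff · k) hchain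
    _ = ∑ n ∈ degrees,
          (transl c (pderiv n P) * Polynomial.derivative (transl c (X n))).coeff k := by
        refine (Finset.sum_subset Finset.subset_union_right fun n _ hn => ?_).symm
        rw [coeff_mul_derivative_transl_X, if_neg]
        refine fun hnk => hn (Finset.mem_map.mpr ⟨n.natPred, ?_, n.succPNat_natPred⟩)
        exact Finset.mem_range.mpr (Nat.lt_of_lt_of_le (Nat.pred_lt n.ne_zero) hnk)
    _ = ∑ i ∈ Finset.range (k + 1),
          c (i + 1) • (transl c (powerSumDeriv i.succPNat P)).coeff (k - i) := by
        rw [Finset.sum_map]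
        refine Finset.sum_congr rfl fun i hi => ?_
        rw [Function.Embedding.coeFn_mk, coeff_mul_derivative_transl_X, Nat.succPNat_coe,
          if_pos (Nat.succ_le_of_lt (Finset.mem_range.mp hi)), Nat.succ_sub_succ,
          powerSumDeriv_apply, map_smul, Polynomial.coeff_smul, smul_smul, mul_comm]
        rfl

lemma DopF_genFamF (c : ℕ → Fq) (k : ℕ) (P : LamF) :
    DopF (genFamF c k) P = (transl c P).coeff k := by
  rw [DopF_eq_diffOp]
  induction k using Nat.strong_induction_on generalizing P with
  | _ k ih =>
    cases k with
    | zero => rw [genFamF_zero, map_one, Module.End.one_apply, coeff_zero_transl]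
    | succ k =>
      refine smul_right_injective LamF (Nat.cast_add_one_ne_zero (R := Fq) k) ?_
      beta_reduce
      rw [coeff_transl_succ, ← LinearMap.smul_apply, ← map_smul, succ_smul_genFamF_succ, map_sum,
        LinearMap.sum_apply]
      refine Finset.sum_congr rfl fun i _ => ?_
      rw [map_smul, mul_comm, map_mul, diffOp_ppF, LinearMap.smul_apply, Module.End.mul_apply,
        ih (k - i) (Nat.sub_lt_succ k i)]

lemma natDegree_transl_X_le (c : ℕ → Fq) (n : ℕ+) : (transl c (X n)).natDegree ≤ n := by
  rw [transl_X]
  exact (Polynomial.natDegree_add_le _ _).trans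
    (max_le ((Polynomial.natDegree_C _).trans_le n.1.zero_le) (Polynomial.natDegree_monomial_le _))

lemma natDegree_transl_le (c : ℕ → Fq) (P : LamF) : (transl c P).natDegree ≤ wboundF P := by
  conv_lhs => rw [P.as_sum, map_sum]
  refine Polynomial.natDegree_sum_le_of_forall_le _ _ fun α hα => ?_
  have hα' : (α.sum fun i k => (i : ℕ) * k) ≤ wboundF P :=
    Finset.le_sup (f := fun α : ℕ+ →₀ ℕ => α.sum fun i k => (i : ℕ) * k) hα
  rw [monomial_eq, ← smul_eq_C_mul, map_smul, map_finsuppProd]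
  refine (Polynomial.natDegree_smul_le _ _).trans
    ((Polynomial.natDegree_prod_le _ _).trans (le_trans (Finset.sum_le_sum fun n _ => ?_) hα'))
  beta_reduce
  rw [map_pow, mul_comm]
  exact Polynomial.natDegree_pow_le.trans (Nat.mul_le_mul_left _ (natDegree_transl_X_le c n))

/-! ### Jacobi–Trudi determinants -/

section JacobiTrudi

variable {R S : Type*} [CommRing R] [CommRing S] {l r : ℕ}

/-- The Jacobi–Trudi determinant `det (h_{ν_i-i+j})` of an integer tuple over an arbitrary
two-sided sequence `h`. -/
def jacobiTrudi (h : ℤ → R) (ν : Fin r → ℤ) : R :=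
  (Matrix.of fun i j : Fin r => h (ν i - (i : ℕ) + (j : ℕ))).det

/-- The minor of the Jacobi–Trudi matrix of `(a, ρ)` without the first row and column `k`; it does
not depend on `a`. -/
def jacobiTrudiMinor (h : ℤ → R) (ρ : Fin l → ℤ) (k : Fin (l + 1)) : R :=
  (Matrix.of fun i j : Fin l => h (ρ i - ((i : ℕ) + 1) + (k.succAbove j : ℕ))).det

lemma map_jacobiTrudi (f : R →+* S) (h : ℤ → R) (ν : Fin r → ℤ) :
    f (jacobiTrudi h ν) = jacobiTrudi (f ∘ h) ν :=
  f.map_det _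

lemma map_jacobiTrudiMinor (f : R →+* S) (h : ℤ → R) (ρ : Fin l → ℤ) (k : Fin (l + 1)) :
    f (jacobiTrudiMinor h ρ k) = jacobiTrudiMinor (f ∘ h) ρ k :=
  f.map_det _

lemma jacobiTrudi_cons (h : ℤ → R) (a : ℤ) (ρ : Fin l → ℤ) :
    jacobiTrudi h (Fin.cons a ρ : Fin (l + 1) → ℤ) =
      ∑ k : Fin (l + 1), (-1) ^ (k : ℕ) * h (a + (k : ℕ)) * jacobiTrudiMinor h ρ k := by
  rw [jacobiTrudi, Matrix.det_succ_row_zero]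
  refine Finset.sum_congr rfl fun k _ => ?_
  rw [Matrix.of_apply, Fin.cons_zero, Fin.val_zero, Nat.cast_zero, sub_zero]
  rfl

/-- Prefix the row `(1, u, u², …)` and subtract `u` times each column from the next. -/
lemma det_succ_sub_smul_castSucc (u : R) (x : Fin l → Fin (l + 1) → R) :
    (Matrix.of fun i j : Fin l => x i j.succ - u * x i j.castSucc).det =
      ∑ k : Fin (l + 1), (-1) ^ (k : ℕ) * u ^ (k : ℕ) *
        (Matrix.of fun i j : Fin l => x i (k.succAbove j)).det := by
  let A : Matrix (Fin (l + 1)) (Fin (l + 1)) R := Matrix.of (Fin.cons (fun k => u ^ (k : ℕ)) x)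
  let B : Matrix (Fin (l + 1)) (Fin (l + 1)) R := Matrix.of (Fin.cons (Fin.cons 1 fun _ => 0)
    fun i => Fin.cons (x i 0) fun j => x i j.succ - u * x i j.castSucc)
  have hAB : A.det = B.det := by
    refine Matrix.det_eq_of_forall_col_eq_smul_add_pred (fun _ => u) (fun i => ?_) fun i j => ?_
    · refine Fin.cases ?_ (fun i => ?_) i <;> simp [A, B]
    · refine Fin.cases ?_ (fun i => ?_) i <;> simp [A, B, pow_succ, mul_comm]
  have hB : B.det = (Matrix.of fun i j : Fin l => x i j.succ - u * x i j.castSucc).det := by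
    rw [Matrix.det_succ_row_zero, Fin.sum_univ_succ, Finset.sum_eq_zero fun j _ => by simp [B],
      add_zero, Fin.val_zero, pow_zero, one_mul]
    exact one_mul _
  rw [← hB, ← hAB, Matrix.det_succ_row_zero]
  rfl

/-- Subtracting `u h_{k-1}` from `h_k` replaces the entries `h_{a+k}` of the row-zero expansion
`jacobiTrudi_cons` by `u^k`. -/
lemma jacobiTrudi_sub_shift (u : R) (h : ℤ → R) (ρ : Fin l → ℤ) :
    jacobiTrudi (fun k => h k - u * h (k - 1)) ρ =
      ∑ k : Fin (l + 1), (-1) ^ (k : ℕ) * u ^ (k : ℕ) * jacobiTrudiMinor h ρ k := by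
  refine Eq.trans ?_ (det_succ_sub_smul_castSucc u fun (i : Fin l) (j : Fin (l + 1)) =>
    h (ρ i - ((i : ℕ) + 1) + (j : ℕ)))
  refine congrArg Matrix.det (Matrix.ext fun i j => ?_)
  rw [Matrix.of_apply, Matrix.of_apply, Fin.val_succ, Fin.val_castSucc]
  refine congrArg₂ (· - u * ·) (congrArg h ?_) (congrArg h ?_) <;> push_cast <;> ring

lemma jacobiTrudi_eq_zero_of_add_deltaT_neg {h : ℤ → R} (h0 : ∀ k < 0, h k = 0) {ν : Fin r → ℤ}
    {i : Fin r} (hi : ν i + deltaT r i < 0) : jacobiTrudi h ν = 0 := by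
  refine Matrix.det_eq_zero_of_row_eq_zero i fun j => h0 _ ?_
  rw [deltaT] at hi
  omega

lemma jacobiTrudi_eq_zero_of_not_isPartitionT {h : ℤ → R} (h0 : ∀ k < 0, h k = 0)
    {π : Fin r → ℤ} (ha : Antitone π) (hp : ¬ IsPartitionT π) : jacobiTrudi h π = 0 := by
  obtain ⟨i, hi⟩ : ∃ i, π i < 0 := by
    by_contra! hc
    exact hp ⟨ha, hc⟩
  cases r with
  | zero => exact i.elim0
  | succ r =>
    have hlast := ha (Fin.le_last i)
    refine jacobiTrudi_eq_zero_of_add_deltaT_neg h0 (i := Fin.last r) ?_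
    rw [deltaT, Fin.val_last]
    omega

/-! ### Straightening -/

lemma exists_sorts {ν : Fin r → ℤ} (hν : Function.Injective (ν + deltaT r)) :
    ∃ σ, Sorts ν σ := by
  have hneg : Function.Injective (-(ν + deltaT r)) := neg_injective.comp hν
  exact ⟨Tuple.sort (-(ν + deltaT r)), fun a b hab => neg_lt_neg_iff.mp <|
    (Tuple.monotone_sort _).strictMono_of_injective (hneg.comp (Equiv.injective _)) hab⟩

lemma jacobiTrudi_permute (h : ℤ → R) (ν : Fin r → ℤ) (σ : Equiv.Perm (Fin r)) :
    jacobiTrudi h (fun i => ν (σ i) + deltaT r (σ i) - deltaT r i) =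
      ((Equiv.Perm.sign σ : ℤ) : R) * jacobiTrudi h ν := by
  rw [jacobiTrudi, jacobiTrudi, ← Matrix.det_permute]
  refine congrArg Matrix.det (Matrix.ext fun i j => congrArg h ?_)
  simp only [deltaT, id]
  ring

lemma jacobiTrudi_eq_sgnT_mul (h : ℤ → R) (ν : Fin r → ℤ) :
    jacobiTrudi h ν = (sgnT ν : R) * jacobiTrudi h (piT ν) := by
  by_cases hν : ∃ σ, Sorts ν σ
  · rw [sgnT, dif_pos hν, piT, dif_pos hν, jacobiTrudi_permute, ← mul_assoc, ← Int.cast_mul,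
      Int.units_coe_mul_self, Int.cast_one, one_mul]
  · obtain ⟨a, b, hab, hne⟩ := Function.not_injective_iff.mp (mt exists_sorts hν)
    rw [sgnT, dif_neg hν, Int.cast_zero, zero_mul]
    refine Matrix.det_zero_of_row_eq hne (funext fun j => congrArg h ?_)
    simp only [Pi.add_apply, deltaT] at hab
    omega

end JacobiTrudi

lemma piT_antitone {r : ℕ} (ν : Fin r → ℤ) : Antitone (piT ν) := by
  by_cases hν : ∃ σ, Sorts ν σ
  · rw [piT, dif_pos hν]
    cases r with
    | zero => exact fun a => a.elim0
    | succ r =>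
      refine Fin.antitone_iff_succ_le.mpr fun i => ?_
      have hlt := hν.choose_spec (Fin.castSucc_lt_succ (i := i))
      simp only [deltaT, Fin.val_succ, Fin.val_castSucc] at hlt ⊢
      omega
  · rw [piT, dif_neg hν]
    exact antitone_const

/-! ### Bernstein's formula and the action of `X_n^+` -/

lemma hZF_of_neg {k : ℤ} (hk : k < 0) : hZF k = 0 :=
  if_neg hk.not_ge

lemma hZF_natCast (k : ℕ) : hZF k = hhF k := by
  rw [hZF, if_pos k.cast_nonneg, Int.toNat_natCast]

lemma schurF_eq_jacobiTrudi {r : ℕ} (ρ : Fin r → ℤ) : schurF ρ = jacobiTrudi hZF ρ := rfl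

/-- The annihilation part of `X⁺(z)`, with `t = z⁻¹`. -/
def annihilation : LamF →ₐ[Fq] Polynomial LamF := transl fun n => -(qq⁻¹ ^ n)

lemma DopF_ApF (k : ℕ) (P : LamF) : DopF (ApF k) P = (annihilation P).coeff k :=
  DopF_genFamF _ k P

/-- The element `t/q`. -/
def tDivQ : Polynomial LamF := Polynomial.monomial 1 (C qq⁻¹)

lemma tDivQ_pow (k : ℕ) : tDivQ ^ k = Polynomial.monomial k (C (qq⁻¹ ^ k)) := by
  rw [tDivQ, Polynomial.monomial_pow, one_mul, C_pow]

lemma annihilation_ppF (n : ℕ+) :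
    annihilation (ppF n) = Polynomial.C (ppF n) - tDivQ ^ (n : ℕ) := by
  rw [annihilation, ppF, transl_X, tDivQ_pow, sub_eq_add_neg, C_neg, map_neg]
  rfl

lemma map_annihilation_powerSumSeries :
    (powerSumSeries fun _ => 1).map (annihilation : LamF →+* Polynomial LamF) =
      (powerSumSeries fun _ => 1).map Polynomial.C - PowerSeries.mk fun k => tDivQ ^ (k + 1) := by
  ext1 k
  simp only [PowerSeries.coeff_map, powerSumSeries, PowerSeries.coeff_mk, map_sub, one_smul]
  exact annihilation_ppF k.succPNat

lemma map_annihilation_genSeries :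
    (genSeries fun _ => 1).map (annihilation : LamF →+* Polynomial LamF) =
      (1 - PowerSeries.C tDivQ * PowerSeries.X) * (genSeries fun _ => 1).map Polynomial.C := by
  refine map_genSeries_eq (annihilation : LamF →+* Polynomial LamF) _ ?_ ?_
  · rw [map_mul, constantCoeff_map_genSeries Polynomial.C]
    simp
  · rw [map_annihilation_powerSumSeries]
    exact derivative_one_sub_C_mul_X_mul tDivQ (derivative_map_genSeries Polynomial.C _)

lemma annihilation_hZF (k : ℤ) :
    annihilation (hZF k) = Polynomial.C (hZF k) - tDivQ * Polynomial.C (hZF (k - 1)) := by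
  rcases lt_or_ge k 0 with hk | hk
  · rw [hZF_of_neg hk, hZF_of_neg (by omega)]
    simp
  · obtain ⟨k, rfl⟩ := Int.eq_ofNat_of_zero_le hk
    have hcoeff := congrArg (PowerSeries.coeff k) map_annihilation_genSeries
    rw [sub_mul, one_mul, mul_assoc, map_sub, PowerSeries.coeff_C_mul, PowerSeries.coeff_map,
      PowerSeries.coeff_map, genSeries, PowerSeries.coeff_mk] at hcoeff
    cases k with
    | zero =>
      rw [hZF_of_neg (show ((0 : ℕ) : ℤ) - 1 < 0 by omega), hZF_natCast]
      simpa [hhF] using hcoeff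
    | succ k =>
      rw [PowerSeries.coeff_succ_X_mul, PowerSeries.coeff_map, PowerSeries.coeff_mk] at hcoeff
      rw [Nat.cast_succ, add_sub_cancel_right, ← Nat.cast_succ, hZF_natCast, hZF_natCast]
      exact hcoeff

lemma annihilation_schurF {l : ℕ} (ρ : Fin l → ℤ) :
    annihilation (schurF ρ) = ∑ k : Fin (l + 1), Polynomial.monomial (k : ℕ)
      (qq⁻¹ ^ (k : ℕ) • ((-1) ^ (k : ℕ) * jacobiTrudiMinor hZF ρ k)) := by
  have hmap : (annihilation : LamF →+* Polynomial LamF) ∘ hZF =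
      fun k => (Polynomial.C ∘ hZF) k - tDivQ * (Polynomial.C ∘ hZF) (k - 1) :=
    funext annihilation_hZF
  refine (map_jacobiTrudi (annihilation : LamF →+* Polynomial LamF) hZF ρ).trans ?_
  rw [hmap, jacobiTrudi_sub_shift]
  refine Finset.sum_congr rfl fun k _ => ?_
  rw [← map_jacobiTrudiMinor, tDivQ_pow, mul_assoc, Polynomial.monomial_mul_C, smul_eq_C_mul,
    mul_left_comm (C _), ← Polynomial.C_mul_monomial (a := (-1) ^ (k : ℕ)), Polynomial.C_pow,
    Polynomial.C_neg, Polynomial.C_1]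

/-- The map `Q(t) ↦ [z^b] H(qz) H(z/q) Q(z⁻¹)`: multiplication by the creation part of `X⁺(z)`
and extraction of the coefficient of `z^b`. -/
def creation (b : ℤ) : Polynomial LamF →ₗ[LamF] LamF :=
  Polynomial.lsum fun j => LinearMap.mulLeft LamF (HZp (j + b))

lemma creation_monomial (b : ℤ) (k : ℕ) (Q : LamF) :
    creation b (Polynomial.monomial k Q) = HZp (k + b) * Q := by
  rw [creation, Polynomial.lsum_apply, Polynomial.sum_monomial_index _ _ (by simp),
    LinearMap.mulLeft_apply]

lemma Xp_single (i n m : ℤ) (P : LamF) :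
    Xp i n (Finsupp.single m P) =
      Finsupp.single (m + 1) (creation (-2 * m - n - 1 - i) (annihilation P)) := by
  rw [Xp, Finsupp.sum_single_index (by simp [DopF]), creation, Polynomial.lsum_apply,
    Polynomial.sum_over_range' _ (by simp) (wboundF P + 1)
      (show (annihilation P).natDegree < _ from Nat.lt_succ_of_le (natDegree_transl_le _ P))]
  refine congrArg _ (Finset.sum_congr rfl fun j _ => ?_)
  rw [DopF_ApF, LinearMap.mulLeft_apply]
  congr 2
  ring

lemma HZp_eq_sum {N : ℕ} {x : ℤ} (hx : x < N) :
    HZp x = ∑ j ∈ Finset.range N, qq ^ (x - 2 * (j : ℤ)) • (hhF j * hZF (x - j)) := by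
  rcases lt_or_ge x 0 with hneg | hnonneg
  · rw [HZp, if_neg hneg.not_ge, Finset.sum_eq_zero fun j _ => ?_]
    rw [hZF_of_neg (by omega), mul_zero, smul_zero]
  · obtain ⟨k, rfl⟩ := Int.eq_ofNat_of_zero_le hnonneg
    rw [HZp, if_pos hnonneg, Int.toNat_natCast, HpF_eq_sum]
    refine Eq.trans (Finset.sum_congr rfl fun j hj => ?_)
      (Finset.sum_subset (Finset.range_mono (show k + 1 ≤ N by omega)) fun j _ hj => ?_)
    · have hj' : j ≤ k := Nat.lt_succ_iff.mp (Finset.mem_range.mp hj)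
      rw [← Nat.cast_sub hj', hZF_natCast, inv_pow, ← zpow_natCast, ← zpow_natCast, ← zpow_neg,
        ← zpow_add₀ qq_ne_zero, Nat.cast_sub hj']
      congr 2
      ring
    · rw [Finset.mem_range] at hj
      rw [hZF_of_neg (by omega), mul_zero, smul_zero]

lemma creation_annihilation_schurF {l N : ℕ} (ρ : Fin l → ℤ) {b : ℤ} (hN : b + l < N) :
    creation b (annihilation (schurF ρ)) = ∑ j ∈ Finset.range N,
      qq ^ (b - 2 * (j : ℤ)) • (hhF j * schurF (Fin.cons (b - j) ρ : Fin (l + 1) → ℤ)) := by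
  have hterm : ∀ k : Fin (l + 1),
      HZp ((k : ℕ) + b) * (qq⁻¹ ^ (k : ℕ) • ((-1) ^ (k : ℕ) * jacobiTrudiMinor hZF ρ k)) =
        ∑ j ∈ Finset.range N, qq ^ (b - 2 * (j : ℤ)) • (hhF j *
          ((-1) ^ (k : ℕ) * hZF (b - j + (k : ℕ)) * jacobiTrudiMinor hZF ρ k)) := fun k => by
    rw [HZp_eq_sum (N := N) (by omega), Finset.sum_mul]
    refine Finset.sum_congr rfl fun j _ => ?_
    rw [smul_mul_smul_comm, inv_pow, ← zpow_natCast, ← zpow_neg, ← zpow_add₀ qq_ne_zero]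
    congr 1
    · congr 1
      ring
    · rw [show ((k : ℕ) : ℤ) + b - j = b - j + (k : ℕ) by ring]
      ring
  simp only [annihilation_schurF, map_sum, creation_monomial, hterm]
  rw [Finset.sum_comm]
  refine Finset.sum_congr rfl fun j _ => ?_
  rw [schurF_eq_jacobiTrudi, jacobiTrudi_cons, Finset.mul_sum, Finset.smul_sum]

lemma schurF_cons_eq_zero {l : ℕ} {a : ℤ} (ρ : Fin l → ℤ) (ha : a + l < 0) :
    schurF (Fin.cons a ρ : Fin (l + 1) → ℤ) = 0 := by
  refine jacobiTrudi_eq_zero_of_add_deltaT_neg (fun _ => hZF_of_neg) (i := 0) ?_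
  simpa [deltaT] using ha

lemma Xp_single_schurF {l : ℕ} (ρ : Fin l → ℤ) (m n i : ℤ) :
    Xp i n (Finsupp.single m (schurF ρ)) = Finsupp.single (m + 1)
      (∑ᶠ j : ℕ, qq ^ (-2 * m - n - 1 - i - 2 * (j : ℤ)) •
        (hhF j * schurF (Fin.cons (-2 * m - n - 1 - i - j) ρ : Fin (l + 1) → ℤ))) := by
  rw [Xp_single]
  generalize -2 * m - n - 1 - i = b
  obtain ⟨N, hN⟩ : ∃ N : ℕ, b + l < N := ⟨(b + l).toNat + 1, by omega⟩
  rw [creation_annihilation_schurF ρ hN, finsum_eq_sum_of_support_subset]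
  refine Function.support_subset_iff'.mpr fun j hj => ?_
  have hNj : N ≤ j := by simpa using hj
  rw [schurF_cons_eq_zero _ (by omega), mul_zero, smul_zero]

/-! ### The Pieri rule -/

section Pieri

variable {R : Type*} [CommRing R] {r : ℕ}

/-- The tail series `G_k = ∑ h_{k+b} t^b` of the sequence `h`. -/
def tailSeries (h : ℤ → R) (k : ℤ) : PowerSeries R := PowerSeries.mk fun b => h (k + b)

lemma tailSeries_eq_C_add (h : ℤ → R) (k : ℤ) :
    tailSeries h k = PowerSeries.C (h k) + PowerSeries.X * tailSeries h (k + 1) := by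
  ext1 b
  rw [map_add]
  cases b with
  | zero => simp [tailSeries]
  | succ b =>
    rw [PowerSeries.coeff_succ_X_mul, PowerSeries.coeff_C, if_neg b.succ_ne_zero, zero_add,
      tailSeries, tailSeries, PowerSeries.coeff_mk, PowerSeries.coeff_mk, Nat.cast_succ,
      add_assoc, add_comm 1]

lemma tailSeries_eq_sum_add (h : ℤ → R) (x : ℤ) {a u : ℕ} (hau : a ≤ u) :
    tailSeries h (a + x) =
      ∑ v ∈ Finset.Icc a u, PowerSeries.X ^ (v - a) * PowerSeries.C (h (v + x)) +
        PowerSeries.X ^ (u + 1 - a) * tailSeries h ((u + 1 : ℕ) + x) := by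
  induction u, hau using Nat.le_induction with
  | base =>
    rw [Finset.Icc_self, Finset.sum_singleton, Nat.sub_self, pow_zero, one_mul,
      Nat.add_sub_cancel_left, pow_one, tailSeries_eq_C_add, Nat.cast_succ, add_right_comm]
  | succ u hau ih =>
    rw [ih, Finset.sum_Icc_succ_top (by omega), tailSeries_eq_C_add h ((u + 1 : ℕ) + x),
      Nat.sub_add_comm (by omega : a ≤ u + 1), pow_succ, Nat.cast_succ (u + 1),
      add_right_comm _ x 1]
    ring

/-- The matrix of the tail series `G_{q_i-i+c}`. Its determinant is, by multilinearity,
`∑ t^{|β|} s_{q+β}` over all tuples `β ≥ 0`. -/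
def tailMatrix (h : ℤ → R) (q : Fin r → ℕ) : Matrix (Fin r) (Fin r) (PowerSeries R) :=
  Matrix.of fun i c => tailSeries h (q i + ((c : ℕ) - (i : ℕ)))

/-- The part of `tailMatrix h q` that contributes the tuples `λ = q + β` with `λ ≤ u`. -/
def stripMatrix (h : ℤ → R) (q u : Fin r → ℕ) : Matrix (Fin r) (Fin r) (PowerSeries R) :=
  Matrix.of fun i c => ∑ v ∈ Finset.Icc (q i) (u i),
    PowerSeries.X ^ (v - q i) * PowerSeries.C (h (v + ((c : ℕ) - (i : ℕ))))

lemma tailMatrix_apply_eq_add (h : ℤ → R) {q u : Fin r → ℕ} {i : Fin r} (hi : q i ≤ u i)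
    (c : Fin r) :
    tailMatrix h q i c = stripMatrix h q u i c + PowerSeries.X ^ (u i + 1 - q i) *
      tailSeries h ((u i + 1 : ℕ) + ((c : ℕ) - (i : ℕ))) :=
  tailSeries_eq_sum_add h _ hi

lemma det_stripMatrix (h : ℤ → R) (q u : Fin r → ℕ) :
    (stripMatrix h q u).det = ∑ lam ∈ Fintype.piFinset fun i => Finset.Icc (q i) (u i),
      PowerSeries.X ^ (∑ i, (lam i - q i)) *
        PowerSeries.C (jacobiTrudi h fun i => (lam i : ℤ)) := by
  let row (i : Fin r) (v : ℕ) : Fin r → PowerSeries R := fun c =>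
    PowerSeries.X ^ (v - q i) * PowerSeries.C (h (v + ((c : ℕ) - (i : ℕ))))
  have hrows : stripMatrix h q u = fun i => ∑ v ∈ Finset.Icc (q i) (u i), row i v := by
    funext i c
    rw [Finset.sum_apply]
    rfl
  rw [hrows]
  refine (MultilinearMap.map_sum_finset (Matrix.detRowAlternating (n := Fin r)
    (R := PowerSeries R)).toMultilinearMap row _).trans (Finset.sum_congr rfl fun lam _ => ?_)
  rw [← Finset.prod_pow_eq_pow_sum, jacobiTrudi, RingHom.map_det, ← Matrix.det_mul_column]
  refine congrArg Matrix.det (Matrix.ext fun i c => congrArg (fun x => _ * PowerSeries.C (h x)) ?_)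
  ring

lemma det_eq_mul_of_last_row (A : Matrix (Fin (r + 1)) (Fin (r + 1)) R)
    (hA : ∀ c : Fin r, A (Fin.last r) c.castSucc = 0) :
    A.det = A (Fin.last r) (Fin.last r) * (A.submatrix Fin.castSucc Fin.castSucc).det := by
  rw [Matrix.det_succ_row A (Fin.last r), Fin.sum_univ_castSucc,
    Finset.sum_eq_zero fun c _ => by rw [hA, mul_zero, zero_mul], zero_add,
    Even.neg_one_pow ⟨_, rfl⟩, one_mul, Fin.succAbove_last]

/-- Subtract from each column `t` times the next one. -/
lemma det_tailMatrix_eq_det_snoc (h : ℤ → R) (q : Fin (r + 1) → ℕ) :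
    (tailMatrix h q).det = (Matrix.of fun i : Fin (r + 1) => (Fin.snoc
      (fun c : Fin r => PowerSeries.C (h (q i + ((c : ℕ) - (i : ℕ)))))
      (tailMatrix h q i (Fin.last r)) : Fin (r + 1) → PowerSeries R)).det := by
  rw [← Matrix.det_submatrix_equiv_self Fin.revPerm, ← Matrix.det_submatrix_equiv_self Fin.revPerm
    (Matrix.of _)]
  refine Matrix.det_eq_of_forall_col_eq_smul_add_pred (fun _ => PowerSeries.X) (fun i => ?_)
    fun i c => ?_
  · simp
  · simp only [Matrix.submatrix_apply, Fin.revPerm_apply, Fin.rev_succ, Fin.rev_castSucc,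
      Matrix.of_apply, Fin.snoc_castSucc, tailMatrix]
    rw [tailSeries_eq_C_add, Fin.val_castSucc, Fin.val_succ, Nat.cast_succ]
    congr 3
    ring

/-- The tuple `p` with a zero part appended, since a horizontal strip may add one row. -/
def appendZero (p : Fin r → ℕ) : Fin (r + 1) → ℕ := Fin.snoc p 0

lemma appendZero_castSucc (p : Fin r → ℕ) (i : Fin r) : appendZero p i.castSucc = p i :=
  Fin.snoc_castSucc ..

lemma appendZero_last (p : Fin r → ℕ) : appendZero p (Fin.last r) = 0 :=
  Fin.snoc_last ..

lemma appendZero_antitone {p : Fin r → ℕ} (hp : Antitone p) : Antitone (appendZero p) := by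
  refine Fin.antitone_iff_succ_le.mpr fun i => ?_
  rw [appendZero_castSucc]
  cases r with
  | zero => exact i.elim0
  | succ r =>
    induction i using Fin.lastCases with
    | last =>
      rw [Fin.succ_last, appendZero_last]
      exact Nat.zero_le _
    | cast i =>
      rw [Fin.succ_castSucc, appendZero_castSucc]
      exact hp (Fin.castSucc_lt_succ (i := i)).le

lemma det_tailMatrix_appendZero {h : ℤ → R} (h0 : ∀ k < 0, h k = 0) (p : Fin r → ℕ) :
    (tailMatrix h (appendZero p)).det =
      tailSeries h 0 * PowerSeries.C (jacobiTrudi h fun i => (p i : ℤ)) := by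
  rw [det_tailMatrix_eq_det_snoc, det_eq_mul_of_last_row _ fun c => ?_, jacobiTrudi,
    RingHom.map_det]
  · refine congrArg₂ (· * ·) ?_ (congrArg Matrix.det (Matrix.ext fun i c => ?_))
    · simp [tailMatrix, appendZero_last]
    · simp [appendZero_castSucc, add_sub_assoc, sub_add_eq_add_sub]
  · rw [Matrix.of_apply, Fin.snoc_castSucc, h0, map_zero]
    rw [appendZero_last, Fin.val_last]
    omega

/-- The upper bounds `(q₀ + j, q₀, q₁, …)` for the parts of `λ` when `λ - q` is a horizontal
`j`-strip. -/
def stripBound (q : Fin (r + 1) → ℕ) (j : ℕ) : Fin (r + 1) → ℕ :=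
  Fin.cons (q 0 + j) fun i : Fin r => q i.castSucc

lemma stripBound_zero (q : Fin (r + 1) → ℕ) (j : ℕ) : stripBound q j 0 = q 0 + j := rfl

lemma stripBound_succ (q : Fin (r + 1) → ℕ) (j : ℕ) (i : Fin r) :
    stripBound q j i.succ = q i.castSucc := rfl

/-- The terms of row `i + 1` with `λ_{i+1} > q_i` form a multiple of row `i`. -/
lemma det_tailMatrix_eq_det_updateRow (h : ℤ → R) {q : Fin (r + 1) → ℕ} (hq : Antitone q)
    (j : ℕ) :
    (tailMatrix h q).det =
      ((stripMatrix h q (stripBound q j)).updateRow 0 (tailMatrix h q 0)).det := by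
  refine Matrix.det_eq_of_forall_row_eq_smul_add_pred
    (fun i => PowerSeries.X ^ (q i.castSucc + 1 - q i.succ)) (fun c => ?_) fun i c => ?_
  · rw [Matrix.updateRow_self]
  · rw [tailMatrix_apply_eq_add h (u := stripBound q j) (hq (Fin.castSucc_lt_succ (i := i)).le),
      Matrix.updateRow_ne (Fin.succ_ne_zero i), stripBound_succ, tailMatrix, Matrix.of_apply,
      Fin.val_succ, Fin.val_castSucc]
    congr 3
    push_cast
    ring

/-- The terms of row `0` with `λ_0 > q_0 + j` are divisible by `t^{j+1}`. -/
lemma coeff_det_tailMatrix (h : ℤ → R) {q : Fin (r + 1) → ℕ} (hq : Antitone q) (j : ℕ) :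
    PowerSeries.coeff j (tailMatrix h q).det =
      PowerSeries.coeff j (stripMatrix h q (stripBound q j)).det := by
  have hrow : tailMatrix h q 0 = stripMatrix h q (stripBound q j) 0 +
      (PowerSeries.X : PowerSeries R) ^ (j + 1) • fun c : Fin (r + 1) =>
        tailSeries h ((q 0 + j + 1 : ℕ) + ((c : ℕ) - (0 : ℕ))) := by
    funext c
    rw [tailMatrix_apply_eq_add h (u := stripBound q j) (Nat.le_add_right (q 0) j),
      stripBound_zero, show q 0 + j + 1 - q 0 = j + 1 by omega]
    rfl
  rw [det_tailMatrix_eq_det_updateRow h hq j, hrow, Matrix.det_updateRow_add,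
    Matrix.updateRow_eq_self, Matrix.det_updateRow_smul, map_add, PowerSeries.coeff_X_pow_mul',
    if_neg (Nat.not_succ_le_self j), add_zero]

/-- The tuples `λ` such that `λ - p` is a horizontal `j`-strip (see `mem_horizontalStrips`). -/
def horizontalStrips (p : Fin r → ℕ) (j : ℕ) : Finset (Fin (r + 1) → ℕ) :=
  (Fintype.piFinset fun i =>
    Finset.Icc (appendZero p i) (stripBound (appendZero p) j i)).filter
      fun lam => ∑ i, (lam i - appendZero p i) = j

lemma mul_jacobiTrudi_eq_sum_horizontalStrips {h : ℤ → R} (h0 : ∀ k < 0, h k = 0)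
    {p : Fin r → ℕ} (hp : Antitone p) (j : ℕ) :
    h j * jacobiTrudi h (fun i => (p i : ℤ)) =
      ∑ lam ∈ horizontalStrips p j, jacobiTrudi h fun i => (lam i : ℤ) := by
  have hdet := coeff_det_tailMatrix h (appendZero_antitone hp) j
  rw [det_tailMatrix_appendZero h0, PowerSeries.coeff_mul_C, det_stripMatrix, map_sum, tailSeries,
    PowerSeries.coeff_mk, zero_add] at hdet
  rw [hdet, horizontalStrips, Finset.sum_filter]
  refine Finset.sum_congr rfl fun lam _ => ?_
  rw [PowerSeries.coeff_mul_C, PowerSeries.coeff_X_pow, ite_mul, one_mul, zero_mul]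
  exact if_congr eq_comm rfl rfl

end Pieri

/-! ### Horizontal strips as interlacing -/

section HorizontalStrips

variable {r j : ℕ} {p : Fin r → ℕ} {lam : Fin (r + 1) → ℕ}

lemma succ_le_of_conjT_le (hp : Antitone p) (hl : Antitone lam)
    (h : ∀ c, conjT (fun i => (lam i : ℤ)) c ≤ conjT (fun i => (p i : ℤ)) c + 1) (i : Fin r) :
    lam i.succ ≤ p i := by
  by_contra! hlt
  have hlam : Finset.Iic i.succ ⊆
      ({k | (p i : ℤ) + 1 ≤ (lam k : ℤ)} : Finset (Fin (r + 1))) := fun k hk => by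
    have := hl (Finset.mem_Iic.mp hk)
    rw [Finset.mem_filter_univ]
    omega
  have hp' : ({k | (p i : ℤ) + 1 ≤ (p k : ℤ)} : Finset (Fin r)) ⊆ Finset.Iio i :=
    fun k hk => by
      rw [Finset.mem_filter_univ] at hk
      refine Finset.mem_Iio.mpr (not_le.mp fun hki => ?_)
      have := hp hki
      omega
  have hlam_card := Finset.card_le_card hlam
  have hp_card := Finset.card_le_card hp'
  rw [Fin.card_Iic, Fin.val_succ] at hlam_card
  rw [Fin.card_Iio] at hp_card
  have hc := h (p i)
  simp only [conjT] at hc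
  omega

lemma conjT_le_of_succ_le (h : ∀ i : Fin r, lam i.succ ≤ p i) (c : ℕ) :
    conjT (fun i => (lam i : ℤ)) c ≤ conjT (fun i => (p i : ℤ)) c + 1 := by
  have hsub : ({k | (c : ℤ) + 1 ≤ (lam k : ℤ)} : Finset (Fin (r + 1))) ⊆
      insert 0 (({k | (c : ℤ) + 1 ≤ (p k : ℤ)} : Finset (Fin r)).image Fin.succ) := fun k hk => by
    induction k using Fin.cases with
    | zero => exact Finset.mem_insert_self ..
    | succ k =>
      refine Finset.mem_insert_of_mem (Finset.mem_image_of_mem _ ?_)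
      rw [Finset.mem_filter_univ] at hk ⊢
      exact hk.trans (Nat.cast_le.mpr (h k))
  rw [conjT, conjT]
  exact_mod_cast (Finset.card_le_card hsub).trans <| (Finset.card_insert_le _ _).trans <|
    Nat.add_le_add_right Finset.card_image_le 1

lemma padZ_le_padZ_iff :
    (∀ t, padZ (fun i => (p i : ℤ)) t ≤ padZ (fun i => (lam i : ℤ)) t) ↔
      ∀ i, appendZero p i ≤ lam i := by
  rw [Fin.forall_fin_succ']
  simp only [appendZero_castSucc, appendZero_last, Nat.zero_le, and_true]
  constructor
  · intro h i
    have hi := h i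
    rwa [padZ, padZ, dif_pos i.2, dif_pos (i.2.trans r.lt_succ_self), Nat.cast_le] at hi
  · intro h t
    by_cases ht : t < r
    · rw [padZ, padZ, dif_pos ht, dif_pos (ht.trans r.lt_succ_self), Nat.cast_le]
      exact h ⟨t, ht⟩
    · rw [padZ, dif_neg ht, padZ]
      split_ifs
      exacts [Nat.cast_nonneg _, le_rfl]

lemma sum_sub_appendZero_eq_iff (h : ∀ i, appendZero p i ≤ lam i) :
    ∑ i, (lam i - appendZero p i) = j ↔ ∑ i, (lam i : ℤ) = ∑ i, (p i : ℤ) + j := by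
  have hsum : ∑ i, appendZero p i = ∑ i, p i := by
    rw [appendZero, Fin.sum_snoc, add_zero]
  have hle := Finset.sum_le_sum fun i (_ : i ∈ Finset.univ) => h i
  rw [Finset.sum_tsub_distrib _ fun i _ => h i, ← Nat.cast_sum, ← Nat.cast_sum]
  omega

lemma mem_horizontalStrips_iff_interlace :
    lam ∈ horizontalStrips p j ↔ (∀ i, appendZero p i ≤ lam i) ∧
      (∀ i : Fin r, lam i.succ ≤ p i) ∧ ∑ i, (lam i - appendZero p i) = j := by
  rw [horizontalStrips, Finset.mem_filter, Fintype.mem_piFinset]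
  simp only [Finset.mem_Icc, forall_and, and_assoc]
  refine and_congr_right fun _ => and_congr_left fun hsum => ?_
  have h0 : lam 0 ≤ appendZero p 0 + j := by
    rw [← Nat.sub_le_iff_le_add', ← hsum]
    exact Finset.single_le_sum (f := fun i => lam i - appendZero p i)
      (fun _ _ => Nat.zero_le _) (Finset.mem_univ 0)
  rw [Fin.forall_fin_succ]
  simp only [stripBound_zero, stripBound_succ, appendZero_castSucc, h0, true_and]

lemma mem_horizontalStrips (hp : Antitone p) :
    lam ∈ horizontalStrips p j ↔ Antitone lam ∧ HStrip (fun i => (p i : ℤ)) lam j := by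
  rw [mem_horizontalStrips_iff_interlace, HStrip, padZ_le_padZ_iff]
  constructor
  · rintro ⟨hle, hint, hsum⟩
    refine ⟨Fin.antitone_iff_succ_le.mpr fun i => (hint i).trans ?_, hle,
      (sum_sub_appendZero_eq_iff hle).mp hsum, conjT_le_of_succ_le hint⟩
    rw [← appendZero_castSucc p i]
    exact hle i.castSucc
  · rintro ⟨hl, hle, hsum, hconj⟩
    exact ⟨hle, succ_le_of_conjT_le hp hl hconj, (sum_sub_appendZero_eq_iff hle).mpr hsum⟩

end HorizontalStrips

lemma hhF_mul_schurF {r : ℕ} (ν : Fin r → ℤ) (j : ℕ) :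
    hhF j * schurF ν = (sgnT ν : Fq) • ∑ᶠ (lam : Fin (r + 1) → ℕ)
      (_ : Antitone lam ∧ IsPartitionT (piT ν) ∧ HStrip (piT ν) lam j),
        schurF fun k => (lam k : ℤ) := by
  rw [schurF_eq_jacobiTrudi, jacobiTrudi_eq_sgnT_mul, mul_left_comm, Int.cast_smul_eq_zsmul,
    zsmul_eq_mul]
  congr 1
  have ha := piT_antitone ν
  generalize piT ν = π at ha
  by_cases hπ : IsPartitionT π
  · lift π to Fin r → ℕ using hπ.2
    have hp : Antitone π := fun a b hab => Nat.cast_le.mp (ha hab)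
    rw [← hZF_natCast]
    refine (mul_jacobiTrudi_eq_sum_horizontalStrips (fun _ => hZF_of_neg) hp j).trans
      (finsum_cond_eq_sum_of_cond_iff _ fun {lam} _ => ?_).symm
    rw [mem_horizontalStrips hp]
    exact and_congr_right fun _ => and_iff_right hπ
  · rw [jacobiTrudi_eq_zero_of_not_isPartitionT (fun _ => hZF_of_neg) ha hπ, mul_zero]
    simp [hπ]

theorem Xplus_on_schur_basis_general {l : ℕ} (ρ : Fin l → ℤ) (m n i : ℤ) :
    (Xp i n (Finsupp.single m (schurF ρ)) = Finsupp.single (m + 1)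
      (∑ᶠ j : ℕ, qq ^ (-2 * m - n - 1 - i - 2 * (j : ℤ)) •
        ((sgnT (Fin.cons (-2 * m - n - 1 - i - (j : ℤ)) ρ) : Fq) •
          ∑ᶠ (lam : Fin (l + 2) → ℕ)
            (_ : Antitone lam ∧
              IsPartitionT (piT (Fin.cons (-2 * m - n - 1 - i - (j : ℤ)) ρ)) ∧
              HStrip (piT (Fin.cons (-2 * m - n - 1 - i - (j : ℤ)) ρ)) lam j),
            schurF fun k => (lam k : ℤ)))) ∧
    (Xp i n (Finsupp.single m (schurF ρ)) = Finsupp.single (m + 1)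
      (∑ᶠ j : ℕ, qq ^ (-2 * m - n - 1 - i - 2 * (j : ℤ)) •
        (hhF j * schurF (Fin.cons (-2 * m - n - 1 - i - (j : ℤ)) ρ)))) := by
  refine ⟨(Xp_single_schurF ρ m n i).trans ?_, Xp_single_schurF ρ m n i⟩
  refine congrArg _ (finsum_congr fun j => ?_)
  rw [hhF_mul_schurF]

/-- action of `X_n^+` on the Schur basis via horizontal strips.  For a
partition `μ` of length `l`, `m, n ∈ ℤ`, `i ∈ {0,1}` and `a_j := −2m−n−1−i−j`:
`X_n^+ (s_μ e^{mα}e^{iα/2})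
  = (∑_{j≥0} q^{−2m−n−1−i−2j} · sgn((a_j,μ)) · ∑_λ s_λ) e^{(m+1)α}e^{iα/2}`,
where the inner sum is over all partitions `λ` (represented as weakly decreasing tuples
in `ℕ^{l+2}`) such that `π((a_j,μ))` is a partition and `λ − π((a_j,μ))` is a horizontal
`j`-strip (only finitely many `j` contribute).  Equivalently,
`X_n^+ (s_μ e^{mα}e^{iα/2}) = ∑_{j≥0} q^{−2m−n−1−i−2j}·h_j·s_{(a_j,μ)}·e^{(m+1)α}e^{iα/2}`. -/
theorem Xplus_on_schur_basis (l : ℕ) (mu : Fin l → ℕ) (hmu : Antitone mu)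
    (hmu1 : ∀ k, 1 ≤ mu k) (m n i : ℤ) (hi : i = 0 ∨ i = 1) :
    (Xp i n (Finsupp.single m (schurF fun k => (mu k : ℤ)))
      = Finsupp.single (m+1)
          (∑ᶠ j : ℕ,
            qq ^ (-2*m - n - 1 - i - 2*(j : ℤ)) •
              ((sgnT (Fin.cons (-2*m - n - 1 - i - (j : ℤ)) fun k => (mu k : ℤ)) : Fq) •
                ∑ᶠ (lam : Fin (l+2) → ℕ)
                  (_ : Antitone lam ∧
                    IsPartitionT (piT (Fin.cons (-2*m - n - 1 - i - (j : ℤ))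
                        fun k => (mu k : ℤ))) ∧
                    HStrip (piT (Fin.cons (-2*m - n - 1 - i - (j : ℤ))
                        fun k => (mu k : ℤ))) lam j),
                  schurF fun k => (lam k : ℤ)))) ∧
    (Xp i n (Finsupp.single m (schurF fun k => (mu k : ℤ)))
      = Finsupp.single (m+1)
          (∑ᶠ j : ℕ,
            qq ^ (-2*m - n - 1 - i - 2*(j : ℤ)) •
              (hhF j *
                schurF (Fin.cons (-2*m - n - 1 - i - (j : ℤ)) fun k => (mu k : ℤ))))) :=
  Xplus_on_schur_basis_general _ m n i
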